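/- arXiv:1601.05029 — 7 statements merged into one kernel-verified Lean document; each statement's English description precedes it below -/
import Mathlib

section
/- Let α and β be positive integers with gcd(α,β)=1, let δ be a positive integer, let ℓ be an integer with 0 ≤ ℓ < δ, let μ be a real number, and set η = exp(−2πiℓ/(βδ)). Then a pair (z₁,z₂) of nonzero complex numbers satisfies both z₁ + z₁⁻¹ + z₂ + z₂⁻¹ = 4cos μ and z₁^α z₂^β = exp(2πiℓ/δ) if and only if there exists a nonzero complex number z such that z^β + z^{−β} + η z^α + η⁻¹ z^{−α} = 4cos μ, z₁ = z^β, and z₂ = η⁻¹ z^{−α}. -/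
open Complex

lemma common_root_of_coprime (α β : ℕ) (hgcd : Nat.gcd α β = 1) (x w : ℂ)
    (hx : x ≠ 0) (hw : w ≠ 0) (h : x ^ α = w ^ β) :
    ∃ z : ℂ, z ≠ 0 ∧ z ^ (β : ℤ) = x ∧ z ^ (α : ℤ) = w := by
  have hb := Nat.gcd_eq_gcd_ab α β
  rw [hgcd] at hb
  set a := Nat.gcdA α β
  set b := Nat.gcdB α β
  have h' : x ^ (α : ℤ) = w ^ (β : ℤ) := by exact_mod_cast h
  refine ⟨w ^ a * x ^ b, mul_ne_zero (zpow_ne_zero _ hw) (zpow_ne_zero _ hx), ?_, ?_⟩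
  · rw [mul_zpow, ← zpow_mul, ← zpow_mul, mul_comm a, zpow_mul w, ← h', ← zpow_mul,
      ← zpow_add₀ hx, mul_comm b, ← hb]
    simp
  · rw [mul_zpow, ← zpow_mul, ← zpow_mul, mul_comm b, zpow_mul x, h', ← zpow_mul,
      ← zpow_add₀ hw, mul_comm a, ← hb]
    simp

/-- Equivalence of the tube system (dispersion relation and wrapping
condition with phase `χ(ℓ/δ)`) with its one-variable parametrization by `z`. -/
theorem tube_system_iff_parametrization
    (α β δ : ℕ) (hα : 0 < α) (hβ : 0 < β) (hδ : 0 < δ)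
    (hgcd : Nat.gcd α β = 1)
    (ℓ : ℤ) (hℓ0 : 0 ≤ ℓ) (hℓδ : ℓ < (δ : ℤ)) (μ : ℝ)
    (η : ℂ) (hη : η = Complex.exp (-(2 * Real.pi * Complex.I * ℓ) / (β * δ)))
    (z₁ z₂ : ℂ) (hz₁ : z₁ ≠ 0) (hz₂ : z₂ ≠ 0) :
    (z₁ + z₁⁻¹ + z₂ + z₂⁻¹ = 4 * Real.cos μ ∧
      z₁ ^ α * z₂ ^ β = Complex.exp (2 * Real.pi * Complex.I * ℓ / δ))
    ↔
    (∃ z : ℂ, z ≠ 0 ∧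
      z ^ (β : ℤ) + z ^ (-(β : ℤ)) + η * z ^ (α : ℤ) + η⁻¹ * z ^ (-(α : ℤ))
        = 4 * Real.cos μ ∧
      z₁ = z ^ (β : ℤ) ∧ z₂ = η⁻¹ * z ^ (-(α : ℤ))) := by
  have hη0 : η ≠ 0 := by rw [hη]; exact Complex.exp_ne_zero _
  have hβ' : (β : ℂ) ≠ 0 := by exact_mod_cast hβ.ne'
  have hδ' : (δ : ℂ) ≠ 0 := by exact_mod_cast hδ.ne'
  have hηβ : Complex.exp (2 * Real.pi * Complex.I * ℓ / δ) = (η⁻¹) ^ β := by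
    rw [hη, ← Complex.exp_neg, ← Complex.exp_nat_mul]
    congr 1
    field_simp
  rw [hηβ]
  constructor
  · rintro ⟨h1, h2⟩
    obtain ⟨z, hz, hzb, hza⟩ := common_root_of_coprime α β hgcd z₁ (η * z₂)⁻¹ hz₁
      (inv_ne_zero (mul_ne_zero hη0 hz₂)) (by
        rw [mul_inv, mul_pow, ← h2, inv_pow, mul_assoc,
          mul_inv_cancel₀ (pow_ne_zero _ hz₂), mul_one])
    refine ⟨z, hz, ?_, hzb.symm, ?_⟩
    · rw [zpow_neg, zpow_neg, hzb, hza, ← h1]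
      field_simp
      ring
    · rw [zpow_neg, hza]
      field_simp
  · rintro ⟨z, hz, h, rfl, rfl⟩
    constructor
    · rw [← h]
      simp only [zpow_neg, mul_inv, inv_inv]
      ring
    · rw [mul_pow, zpow_neg, inv_pow (z ^ (α : ℤ))]
      simp only [zpow_natCast]
      rw [← pow_mul, ← pow_mul, mul_comm β α]
      field_simp
end

section
/- Let α and β be positive integers with gcd(α,β)=1, let δ be a positive integer, and let μ be a real number. For each integer ℓ with 0 ≤ ℓ < δ, set η_ℓ = exp(−2πiℓ/(βδ)) and define Z_ℓ = { (z^β, η_ℓ⁻¹ z^{−α}) : z a nonzero complex number with z^β + z^{−β} + η_ℓ z^α + η_ℓ⁻¹ z^{−α} = 4cos μ }. Then the set of pairs (z₁,z₂) of nonzero complex numbers satisfying z₁^{αδ} z₂^{βδ} = 1 and z₁ + z₁⁻¹ + z₂ + z₂⁻¹ = 4cos μ is equal to the union of Z₀, Z₁, …, Z_{δ−1}, and this union is disjoint (Z_ℓ ∩ Z_k = ∅ for 0 ≤ ℓ < k < δ). -/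
open Complex

/-- The set `Z_ℓ` of pairs `(z^β, η_ℓ⁻¹ z^{−α})` with `z` ranging over nonzero
solutions of the one-variable dispersion equation, `η_ℓ = exp(−2πiℓ/(βδ))`. -/
noncomputable def Zset (α β δ : ℕ) (μ : ℝ) (ℓ : ℕ) : Set (ℂ × ℂ) :=
  { p : ℂ × ℂ | ∃ z : ℂ, z ≠ 0 ∧
      z ^ (β : ℤ) + z ^ (-(β : ℤ))
        + Complex.exp (-(2 * Real.pi * Complex.I * ℓ) / (β * δ)) * z ^ (α : ℤ)
        + (Complex.exp (-(2 * Real.pi * Complex.I * ℓ) / (β * δ)))⁻¹ * z ^ (-(α : ℤ))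
        = 4 * Real.cos μ ∧
      p = (z ^ (β : ℤ),
           (Complex.exp (-(2 * Real.pi * Complex.I * ℓ) / (β * δ)))⁻¹ * z ^ (-(α : ℤ))) }

lemma eta_inv_pow (β δ ℓ : ℕ) (hβ : 0 < β) (hδ : 0 < δ) :
    ((Complex.exp (-(2 * Real.pi * Complex.I * ℓ) / (β * δ)))⁻¹) ^ β
      = Complex.exp (2 * Real.pi * Complex.I / δ) ^ ℓ := by
  have hb : (β : ℂ) ≠ 0 := by exact_mod_cast hβ.ne'
  have hd : (δ : ℂ) ≠ 0 := by exact_mod_cast hδ.ne'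
  rw [← Complex.exp_neg, ← Complex.exp_nat_mul, ← Complex.exp_nat_mul]
  congr 1
  field_simp

lemma curve_pow (α β : ℕ) (E z : ℂ) (hz : z ≠ 0) :
    (z ^ (β : ℤ)) ^ α * (E * z ^ (-(α : ℤ))) ^ β = E ^ β := by
  rw [mul_pow, ← zpow_natCast (z ^ (β : ℤ)), ← zpow_natCast (z ^ (-(α : ℤ))), ← zpow_mul,
    ← zpow_mul, mul_left_comm, ← zpow_add₀ hz,
    show (β : ℤ) * α + -(α : ℤ) * β = 0 by ring, zpow_zero, mul_one]

lemma exists_param (α β : ℕ) (hgcd : Nat.gcd α β = 1) (x y : ℂ) (hx : x ≠ 0) (hy : y ≠ 0)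
    (h : x ^ α * y ^ β = 1) :
    ∃ z : ℂ, z ≠ 0 ∧ z ^ (β : ℤ) = x ∧ z ^ (-(α : ℤ)) = y := by
  have hb : (α : ℤ) * Nat.gcdA α β + β * Nat.gcdB α β = 1 := by
    rw [← Nat.gcd_eq_gcd_ab, hgcd]; rfl
  generalize Nat.gcdA α β = a at hb
  generalize Nat.gcdB α β = b at hb
  have h' : x ^ (α : ℤ) * y ^ (β : ℤ) = 1 := by simpa using h
  have key : ∀ n : ℤ, x ^ ((α : ℤ) * n) * y ^ ((β : ℤ) * n) = 1 := by
    intro n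
    rw [zpow_mul, zpow_mul, ← mul_zpow, h', one_zpow]
  refine ⟨x ^ b * y ^ (-a), mul_ne_zero (zpow_ne_zero _ hx) (zpow_ne_zero _ hy), ?_, ?_⟩
  · rw [mul_zpow, ← zpow_mul, ← zpow_mul]
    calc x ^ (b * β) * y ^ (-a * β)
        = x ^ (b * β) * y ^ (-a * β) * (x ^ ((α : ℤ) * a) * y ^ ((β : ℤ) * a)) := by
          rw [key, mul_one]
      _ = (x ^ (b * β) * x ^ ((α : ℤ) * a)) * (y ^ (-a * β) * y ^ ((β : ℤ) * a)) := by ring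
      _ = x := by
          rw [← zpow_add₀ hx, ← zpow_add₀ hy, show b * β + (α : ℤ) * a = 1 by linarith,
            show -a * β + (β : ℤ) * a = 0 by ring]; simp
  · rw [mul_zpow, ← zpow_mul, ← zpow_mul]
    calc x ^ (b * -(α : ℤ)) * y ^ (-a * -(α : ℤ))
        = x ^ (b * -(α : ℤ)) * y ^ (-a * -(α : ℤ)) * (x ^ ((α : ℤ) * b) * y ^ ((β : ℤ) * b)) := by
          rw [key, mul_one]
      _ = (x ^ (b * -(α : ℤ)) * x ^ ((α : ℤ) * b)) * (y ^ (-a * -(α : ℤ)) * y ^ ((β : ℤ) * b)) := by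
          ring
      _ = y := by
          rw [← zpow_add₀ hx, ← zpow_add₀ hy, show b * -(α : ℤ) + (α : ℤ) * b = 0 by ring,
            show -a * -(α : ℤ) + (β : ℤ) * b = 1 by linarith]; simp

lemma Zset_pow (α β δ : ℕ) (hβ : 0 < β) (hδ : 0 < δ) (μ : ℝ) (ℓ : ℕ) (p : ℂ × ℂ)
    (hp : p ∈ Zset α β δ μ ℓ) :
    p.1 ^ α * p.2 ^ β = Complex.exp (2 * Real.pi * Complex.I / δ) ^ ℓ := by
  obtain ⟨z, hz, -, rfl⟩ := hp
  rw [← eta_inv_pow β δ ℓ hβ hδ]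
  exact curve_pow α β _ z hz

/-- Theorem on z-equations: the solution set of the tube system is the
disjoint union of the sets `Z_ℓ`, `0 ≤ ℓ < δ`. -/
theorem solution_set_eq_disjoint_union
    (α β δ : ℕ) (hα : 0 < α) (hβ : 0 < β) (hδ : 0 < δ)
    (hgcd : Nat.gcd α β = 1) (μ : ℝ) :
    ({ p : ℂ × ℂ | p.1 ≠ 0 ∧ p.2 ≠ 0 ∧
        p.1 ^ (α * δ) * p.2 ^ (β * δ) = 1 ∧
        p.1 + p.1⁻¹ + p.2 + p.2⁻¹ = 4 * Real.cos μ }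
      = ⋃ ℓ ∈ Finset.range δ, Zset α β δ μ ℓ) ∧
    (∀ ℓ k : ℕ, ℓ < δ → k < δ → ℓ ≠ k → Zset α β δ μ ℓ ∩ Zset α β δ μ k = ∅) := by
  have hprim := Complex.isPrimitiveRoot_exp δ hδ.ne'
  refine ⟨?_, ?_⟩
  · ext p
    simp only [Set.mem_setOf_eq, Set.mem_iUnion, Finset.mem_range, exists_prop]
    constructor
    · rintro ⟨h1, h2, h3, h4⟩
      have hw : (p.1 ^ α * p.2 ^ β) ^ δ = 1 := by
        rw [mul_pow, ← pow_mul, ← pow_mul, h3]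
      haveI : NeZero δ := ⟨hδ.ne'⟩
      obtain ⟨ℓ, hℓ, hw⟩ := hprim.eq_pow_of_pow_eq_one hw
      refine ⟨ℓ, hℓ, ?_⟩
      have hE := eta_inv_pow β δ ℓ hβ hδ
      unfold Zset
      have hE0 := Complex.exp_ne_zero (-(2 * Real.pi * Complex.I * ℓ) / (β * δ))
      simp only [Set.mem_setOf_eq]
      generalize Complex.exp (-(2 * Real.pi * Complex.I * ℓ) / (β * δ)) = e at *
      have hxy : p.1 ^ α * (e * p.2) ^ β = 1 := by
        rw [mul_pow, mul_left_comm, ← hw, ← hE, ← mul_pow, mul_inv_cancel₀ hE0, one_pow]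
      obtain ⟨z, hz, hz1, hz2⟩ := exists_param α β hgcd _ _ h1 (mul_ne_zero hE0 h2) hxy
      have hz1' : z ^ (-(β : ℤ)) = p.1⁻¹ := by rw [zpow_neg, hz1]
      have hz2' : z ^ (α : ℤ) = (e * p.2)⁻¹ := by rw [← hz2, zpow_neg, inv_inv]
      refine ⟨z, hz, ?_, ?_⟩
      · rw [hz1, hz1', hz2, hz2', ← h4]
        field_simp
        ring
      · rw [hz1, hz2, inv_mul_cancel_left₀ hE0]
    · rintro ⟨ℓ, hℓ, hp⟩
      have hpow := Zset_pow α β δ hβ hδ μ ℓ p hp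
      have h3 : p.1 ^ (α * δ) * p.2 ^ (β * δ) = 1 := by
        rw [pow_mul, pow_mul, ← mul_pow, hpow, ← pow_mul, mul_comm ℓ, pow_mul, hprim.pow_eq_one,
          one_pow]
      obtain ⟨z, hz, he, rfl⟩ := hp
      have hE0 := Complex.exp_ne_zero (-(2 * Real.pi * Complex.I * ℓ) / (β * δ))
      refine ⟨zpow_ne_zero _ hz, mul_ne_zero (inv_ne_zero hE0) (zpow_ne_zero _ hz), h3, ?_⟩
      rw [← he]
      simp only [zpow_neg, mul_inv, inv_inv]
      ring
  · intro ℓ k hℓ hk hne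
    ext p
    simp only [Set.mem_inter_iff, Set.mem_empty_iff_false, iff_false, not_and]
    intro h1 h2
    exact hne (hprim.pow_inj hℓ hk ((Zset_pow α β δ hβ hδ μ ℓ p h1).symm.trans
      (Zset_pow α β δ hβ hδ μ k p h2)))
end

section
/- Let α and β be positive integers, let δ be a positive integer, let ℓ and k be integers with 0 ≤ ℓ < δ and 0 ≤ k < δ, and set η = exp(−2πiℓ/(βδ)) and ν = exp(−2πik/(βδ)). If there exist nonzero complex numbers z and w with z^β = w^β and η⁻¹ z^{−α} = ν⁻¹ w^{−α}, then ℓ = k (and consequently η = ν). -/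
open Complex

/-- Disjointness of the sets `Z_ℓ`: two phases `η = exp(−2πiℓ/(βδ))`
and `ν = exp(−2πik/(βδ))` with `0 ≤ ℓ, k < δ` producing the same pair
`(z^β, η⁻¹ z^{−α}) = (w^β, ν⁻¹ w^{−α})` must have `ℓ = k`. -/
theorem disjointness_of_phases
    (α β δ : ℕ) (hα : 0 < α) (hβ : 0 < β) (hδ : 0 < δ)
    (ℓ k : ℤ) (hℓ0 : 0 ≤ ℓ) (hℓδ : ℓ < (δ : ℤ)) (hk0 : 0 ≤ k) (hkδ : k < (δ : ℤ))
    (η ν : ℂ)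
    (hη : η = Complex.exp (-(2 * Real.pi * Complex.I * ℓ) / (β * δ)))
    (hν : ν = Complex.exp (-(2 * Real.pi * Complex.I * k) / (β * δ)))
    (h : ∃ z w : ℂ, z ≠ 0 ∧ w ≠ 0 ∧ z ^ β = w ^ β ∧
          η⁻¹ * z ^ (-(α : ℤ)) = ν⁻¹ * w ^ (-(α : ℤ))) :
    ℓ = k ∧ η = ν := by
  obtain ⟨z, w, hz, hw, hzw, he⟩ := h
  have hη0 : η ≠ 0 := by rw [hη]; exact Complex.exp_ne_zero _
  have hν0 : ν ≠ 0 := by rw [hν]; exact Complex.exp_ne_zero _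
  have h1 : η * z ^ α = ν * w ^ α := by
    rw [zpow_neg, zpow_neg, zpow_natCast, zpow_natCast, ← mul_inv, ← mul_inv] at he
    exact inv_injective he
  have h2 : η ^ β = ν ^ β := by
    have h3 := congrArg (fun x => x ^ β) h1
    simp only [mul_pow] at h3
    rw [← pow_mul, ← pow_mul, mul_comm α β, pow_mul, pow_mul, hzw] at h3
    exact mul_right_cancel₀ (pow_ne_zero _ (pow_ne_zero _ hw)) h3
  have hβ' : (β : ℂ) ≠ 0 := by exact_mod_cast hβ.ne'
  have hδ' : (δ : ℂ) ≠ 0 := by exact_mod_cast hδ.ne'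
  have hlk : ℓ = k := by
    rw [hη, hν, ← Complex.exp_nat_mul, ← Complex.exp_nat_mul,
      Complex.exp_eq_exp_iff_exists_int] at h2
    obtain ⟨n, hn⟩ := h2
    have hpi : (2 * Real.pi * Complex.I : ℂ) ≠ 0 := Complex.two_pi_I_ne_zero
    have h4 : (2 * Real.pi * Complex.I : ℂ) * k = (2 * Real.pi * Complex.I) * (ℓ + n * δ) := by
      field_simp at hn
      linear_combination (2 * Real.pi * Complex.I : ℂ) * hn
    have h5 : k = ℓ + n * δ := by exact_mod_cast mul_left_cancel₀ hpi h4
    have hn1 : n < 1 := by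
      by_contra hc
      nlinarith
    have hn2 : -1 < n := by
      by_contra hc
      nlinarith
    have : n = 0 := by omega
    subst this
    simpa using h5.symm
  exact ⟨hlk, by rw [hη, hν, hlk]⟩
end

section
/- Let α and β be positive integers with gcd(α,β)=1, and let z₁, z₂, η be nonzero complex numbers with z₁^α z₂^β = η^{−β}. Then there exists a nonzero complex number z such that z₁ = z^β and z₂ = η⁻¹ z^{−α}. -/
/-- Existence step of the parametrization: if `z₁^α z₂^β = η^{−β}`
with `gcd(α,β) = 1`, then `(z₁, z₂) = (z^β, η⁻¹ z^{−α})` for some nonzero `z`. -/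
theorem exists_parametrizing_z
    (α β : ℕ) (hα : 0 < α) (hβ : 0 < β) (hgcd : Nat.gcd α β = 1)
    (z₁ z₂ η : ℂ) (hz₁ : z₁ ≠ 0) (hz₂ : z₂ ≠ 0) (hη : η ≠ 0)
    (h : z₁ ^ α * z₂ ^ β = η ^ (-(β : ℤ))) :
    ∃ z : ℂ, z ≠ 0 ∧ z₁ = z ^ (β : ℤ) ∧ z₂ = η⁻¹ * z ^ (-(α : ℤ)) := by
  have hb := Nat.gcd_eq_gcd_ab α β
  rw [hgcd] at hb
  generalize Nat.gcdA α β = a at hb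
  generalize Nat.gcdB α β = b at hb
  push_cast at hb
  obtain ⟨u, hu⟩ : ∃ u : ℂ, u = (η * z₂)⁻¹ := ⟨_, rfl⟩
  have hu0 : u ≠ 0 := by rw [hu]; exact inv_ne_zero (mul_ne_zero hη hz₂)
  have key : z₁ ^ (α : ℤ) = u ^ (β : ℤ) := by
    rw [zpow_neg, zpow_natCast] at h
    rw [zpow_natCast, zpow_natCast, hu, inv_pow, mul_pow, mul_inv, ← h]
    have : z₂ ^ β ≠ 0 := pow_ne_zero _ hz₂
    field_simp
  have e1 : (u ^ a * z₁ ^ b) ^ (β : ℤ) = z₁ := by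
    calc (u ^ a * z₁ ^ b) ^ (β : ℤ) = (u ^ (β : ℤ)) ^ a * z₁ ^ ((β : ℤ) * b) := by
          rw [mul_zpow, ← zpow_mul, ← zpow_mul, ← zpow_mul, mul_comm a, mul_comm b]
      _ = z₁ := by rw [← key, ← zpow_mul, ← zpow_add₀ hz₁, ← hb, zpow_one]
  have e2 : (u ^ a * z₁ ^ b) ^ (α : ℤ) = u := by
    calc (u ^ a * z₁ ^ b) ^ (α : ℤ) = u ^ ((α : ℤ) * a) * (z₁ ^ (α : ℤ)) ^ b := by
          rw [mul_zpow, ← zpow_mul, ← zpow_mul, ← zpow_mul, mul_comm a, mul_comm b]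
      _ = u := by rw [key, ← zpow_mul, ← zpow_add₀ hu0, ← hb, zpow_one]
  refine ⟨u ^ a * z₁ ^ b, mul_ne_zero (zpow_ne_zero _ hu0) (zpow_ne_zero _ hz₁), e1.symm, ?_⟩
  rw [zpow_neg, e2, hu, inv_inv]
  field_simp
end

section
/- Let k be a real number, set ζ = e^{ik}, and let z₁ and z₂ be nonzero complex numbers. Let M be the 4×4 complex matrix with rows (1, 1, −1, −1), (z₁ − ζ, z₁ − ζ⁻¹, 0, 0), (0, 0, z₂⁻¹ − ζ, z₂⁻¹ − ζ⁻¹), and (1 − ζ z₁⁻¹, 0, 1 − ζ z₂, 0). Then det M = −2i·sin k·(z₁ + z₁⁻¹ + z₂ + z₂⁻¹ − 4cos k). -/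
open Complex Matrix

/-- the determinant of the 4×4 matrix of matching and flux conditions
equals `−2i sin k (z₁ + z₁⁻¹ + z₂ + z₂⁻¹ − 4 cos k)`. -/
theorem det_vertex_condition_matrix
    (k : ℝ) (ζ : ℂ) (hζ : ζ = Complex.exp (Complex.I * k))
    (z₁ z₂ : ℂ) (hz₁ : z₁ ≠ 0) (hz₂ : z₂ ≠ 0)
    (M : Matrix (Fin 4) (Fin 4) ℂ)
    (hM : M = !![1, 1, -1, -1;
                 z₁ - ζ, z₁ - ζ⁻¹, 0, 0;
                 0, 0, z₂⁻¹ - ζ, z₂⁻¹ - ζ⁻¹;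
                 1 - ζ * z₁⁻¹, 0, 1 - ζ * z₂, 0]) :
    M.det = -2 * Complex.I * Real.sin k * (z₁ + z₁⁻¹ + z₂ + z₂⁻¹ - 4 * Real.cos k) := by
  have hz : ζ ≠ 0 := by rw [hζ]; exact Complex.exp_ne_zero _
  have h1 : ζ = Real.cos k + Real.sin k * Complex.I := by
    rw [hζ, mul_comm, Complex.exp_mul_I, Complex.ofReal_cos, Complex.ofReal_sin]
  have h2 : ζ⁻¹ = Real.cos k - Real.sin k * Complex.I := by
    have e : -(Complex.I * (k : ℂ)) = (-(k : ℂ)) * Complex.I := by ring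
    rw [hζ, ← Complex.exp_neg, e, Complex.exp_mul_I, Complex.cos_neg, Complex.sin_neg,
      Complex.ofReal_cos, Complex.ofReal_sin]
    ring
  have h3 : -2 * Complex.I * Real.sin k = ζ⁻¹ - ζ := by rw [h2, h1]; ring
  have h4 : 4 * (Real.cos k : ℂ) = 2 * (ζ⁻¹ + ζ) := by rw [h2, h1]; ring
  have hd : M.det = (ζ⁻¹ - ζ) * ((1 - ζ * z₁⁻¹) * (z₁ - ζ⁻¹) + (1 - ζ * z₂) * (z₂⁻¹ - ζ⁻¹)) := by
    rw [hM]
    simp [Matrix.det_succ_row_zero, Fin.sum_univ_succ, Fin.succAbove]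
    ring
  rw [hd, h3, h4]
  field_simp
  ring
end

section
/- Let k be a real number with sin k ≠ 0, set ζ = e^{ik}, and let z₁ and z₂ be nonzero complex numbers. Let M be the 4×4 complex matrix with rows (1, 1, −1, −1), (z₁ − ζ, z₁ − ζ⁻¹, 0, 0), (0, 0, z₂⁻¹ − ζ, z₂⁻¹ − ζ⁻¹), and (1 − ζ z₁⁻¹, 0, 1 − ζ z₂, 0). Then det M = 0 if and only if z₁ + z₁⁻¹ + z₂ + z₂⁻¹ = 4cos k. -/
open Complex Matrix

/-- when `sin k ≠ 0`, the determinant of the matrix of vertex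
conditions vanishes if and only if the dispersion relation holds. -/
theorem det_zero_iff_dispersion
    (k : ℝ) (hk : Real.sin k ≠ 0) (ζ : ℂ) (hζ : ζ = Complex.exp (Complex.I * k))
    (z₁ z₂ : ℂ) (hz₁ : z₁ ≠ 0) (hz₂ : z₂ ≠ 0)
    (M : Matrix (Fin 4) (Fin 4) ℂ)
    (hM : M = !![1, 1, -1, -1;
                 z₁ - ζ, z₁ - ζ⁻¹, 0, 0;
                 0, 0, z₂⁻¹ - ζ, z₂⁻¹ - ζ⁻¹;
                 1 - ζ * z₁⁻¹, 0, 1 - ζ * z₂, 0]) :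
    M.det = 0 ↔ z₁ + z₁⁻¹ + z₂ + z₂⁻¹ = 4 * Real.cos k := by
  have h0 : ζ ≠ 0 := by rw [hζ]; exact Complex.exp_ne_zero _
  have hinv : ζ⁻¹ = Complex.exp (-(Complex.I * k)) := by rw [hζ, Complex.exp_neg]
  have e1 : ζ = Complex.cos k + Complex.sin k * Complex.I := by
    rw [hζ, mul_comm, Complex.exp_mul_I]
  have e2 : ζ⁻¹ = Complex.cos k - Complex.sin k * Complex.I := by
    rw [hinv, mul_comm, ← neg_mul, Complex.exp_mul_I, Complex.cos_neg, Complex.sin_neg]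
    ring
  have hs : Complex.sin k ≠ 0 := by
    rw [← Complex.ofReal_sin]; exact_mod_cast hk
  have hd : ζ - ζ⁻¹ ≠ 0 := by
    have : ζ - ζ⁻¹ = 2 * (Complex.sin k * Complex.I) := by rw [e2, e1]; ring
    rw [this]
    exact mul_ne_zero two_ne_zero (mul_ne_zero hs Complex.I_ne_zero)
  have hc : (4 : ℂ) * Real.cos k = 2 * (ζ + ζ⁻¹) := by
    rw [e2, e1, Complex.ofReal_cos]; ring
  have hdet : M.det = -(ζ - ζ⁻¹) * (z₁ + z₁⁻¹ + z₂ + z₂⁻¹ - 2 * (ζ + ζ⁻¹)) := by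
    rw [hM]
    simp [Matrix.det_succ_row_zero, Fin.sum_univ_succ, Fin.succAbove]
    field_simp
    ring
  rw [hdet, hc, mul_eq_zero, or_iff_right (neg_ne_zero.mpr hd), sub_eq_zero]
end

section
/- Let k be a real number, set ζ = e^{ik}, and let z₁ and z₂ be nonzero complex numbers satisfying z₁ + z₁⁻¹ + z₂ + z₂⁻¹ = 4cos k. Let M be the 4×4 complex matrix with rows (1, 1, −1, −1), (z₁ − ζ, z₁ − ζ⁻¹, 0, 0), (0, 0, z₂⁻¹ − ζ, z₂⁻¹ − ζ⁻¹), and (1 − ζ z₁⁻¹, 0, 1 − ζ z₂, 0). Then the vector v = (z₁ − ζ⁻¹, −z₁ + ζ, z₂⁻¹ − ζ⁻¹, −z₂⁻¹ + ζ) satisfies M·v = 0. -/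
open Complex Matrix

/-- when the dispersion relation holds, the explicit vector
`v = (z₁ − ζ⁻¹, −z₁ + ζ, z₂⁻¹ − ζ⁻¹, −z₂⁻¹ + ζ)` lies in the kernel of the
matrix of vertex conditions. -/
theorem kernel_vector_of_dispersion
    (k : ℝ) (ζ : ℂ) (hζ : ζ = Complex.exp (Complex.I * k))
    (z₁ z₂ : ℂ) (hz₁ : z₁ ≠ 0) (hz₂ : z₂ ≠ 0)
    (hdisp : z₁ + z₁⁻¹ + z₂ + z₂⁻¹ = 4 * Real.cos k)
    (M : Matrix (Fin 4) (Fin 4) ℂ)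
    (hM : M = !![1, 1, -1, -1;
                 z₁ - ζ, z₁ - ζ⁻¹, 0, 0;
                 0, 0, z₂⁻¹ - ζ, z₂⁻¹ - ζ⁻¹;
                 1 - ζ * z₁⁻¹, 0, 1 - ζ * z₂, 0])
    (v : Fin 4 → ℂ)
    (hv : v = ![z₁ - ζ⁻¹, -z₁ + ζ, z₂⁻¹ - ζ⁻¹, -z₂⁻¹ + ζ]) :
    M.mulVec v = 0 := by
  have hne : ζ ≠ 0 := by rw [hζ]; exact Complex.exp_ne_zero _
  have hinv : ζ⁻¹ = Complex.exp (-(k : ℂ) * Complex.I) := by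
    rw [hζ, ← Complex.exp_neg]; congr 1; ring
  have hcos : 2 * (ζ + ζ⁻¹) = 4 * (Real.cos k : ℂ) := by
    rw [hinv, hζ, Complex.ofReal_cos, Complex.cos, mul_comm Complex.I]; ring
  have h1 : z₁⁻¹ * z₁ = 1 := inv_mul_cancel₀ hz₁
  have h2 : z₂ * z₂⁻¹ = 1 := mul_inv_cancel₀ hz₂
  have h3 : ζ * ζ⁻¹ = 1 := mul_inv_cancel₀ hne
  subst hM hv
  ext i
  fin_cases i
  · simp [Matrix.mulVec, dotProduct, Fin.sum_univ_four]
    ring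
  · simp [Matrix.mulVec, dotProduct, Fin.sum_univ_four]
    ring
  · simp [Matrix.mulVec, dotProduct, Fin.sum_univ_four]
    ring
  · have key : (1 - ζ * z₁⁻¹) * (z₁ - ζ⁻¹) + (1 - ζ * z₂) * (z₂⁻¹ - ζ⁻¹) = 0 := by
      linear_combination hdisp - hcos - ζ * h1 - ζ * h2 + (z₁⁻¹ + z₂) * h3
    simpa [Matrix.mulVec, dotProduct, Fin.sum_univ_four] using key
end
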